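/- Let H be a primitive, aperiodic and marked substitution over a finite alphabet A, with Perron–Frobenius eigenvalue λ of its incidence matrix. Then there exist a real number θ with 0 < θ < λ, a finite set C of positive real numbers, and a constant M > 0, such that for every bispecial word w of L_H there exist c ∈ C and an integer n ≥ 0 with | |w| − c·λ^n | ≤ M·θ^n. -/

import Mathlib

open Filter Topology MeasureTheory

variable {A : Type*}

/-- The shift map on infinite words. -/
def shift (x : ℕ → A) : ℕ → A := fun n => x (n + 1)

/-- Image of a finite word under a substitution. -/
def wordMap (H : A → List A) (w : List A) : List A := w.flatMap H

/-- Image of an infinite word under a substitution (each `H a` nonempty makes this the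
infinite concatenation `H(x₀)H(x₁)⋯`). -/
def substSeq (H : A → List A) (x : ℕ → A) : ℕ → A :=
  fun n => (wordMap H ((List.range (n + 1)).map x)).getD n (x 0)

/-- The prefix of length `n` of an infinite word. -/
def prefixWord (x : ℕ → A) (n : ℕ) : List A := (List.range n).map x

/-- The factor of length `n` at position `i` of an infinite word. -/
def factorAt (x : ℕ → A) (i n : ℕ) : List A := (List.range n).map fun j => x (i + j)

/-- The language of an infinite word: the set of its finite factors. -/
def Lang (u : ℕ → A) : Set (List A) := {w | ∃ i, w = factorAt u i w.length}

/-- A sequence is (purely) periodic for the shift. -/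
def PeriodicSeq (x : ℕ → A) : Prop := ∃ m, 0 < m ∧ ∀ n, x (n + m) = x n

/-- `u` is a fixed point of the substitution `H`. -/
def IsFixedPointSubst (H : A → List A) (u : ℕ → A) : Prop := substSeq H u = u

/-- `H` is primitive: some power of `H` maps every letter onto a word containing
every letter. -/
def PrimitiveSubst (H : A → List A) : Prop :=
  ∃ k, 0 < k ∧ ∀ a b : A, b ∈ (wordMap H)^[k] [a]

/-- `H` is aperiodic: no fixed point of `H` is periodic for the shift. -/
def AperiodicSubst (H : A → List A) : Prop :=
  ∀ u : ℕ → A, IsFixedPointSubst H u → ¬ PeriodicSeq u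

/-- `H` is marked: first letters of images are pairwise distinct, and so are last letters. -/
def MarkedSubst (H : A → List A) (hne : ∀ a, H a ≠ []) : Prop :=
  Function.Injective (fun a => (H a).head (hne a)) ∧
  Function.Injective (fun a => (H a).getLast (hne a))

/-- `H` is 2-full (with respect to the fixed point `u`): every word of length 2 belongs
to the language. -/
def TwoFull (H : A → List A) (u : ℕ → A) : Prop :=
  ∀ w : List A, w.length = 2 → w ∈ Lang u

/-- The attractor `K`: closure of the shift-orbit of the fixed point `u`. -/
def orbitClosure [TopologicalSpace A] (u : ℕ → A) : Set (ℕ → A) :=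
  closure {y | ∃ n, y = shift^[n] u}

/-- `δ(x)`: the length of the maximal prefix of `x` belonging to the language of `u`. -/
noncomputable def delta (u x : ℕ → A) : ℕ := sSup {n | prefixWord x n ∈ Lang u}

/-- The renormalization operator `R`. -/
noncomputable def renorm (H : A → List A) (V : (ℕ → A) → ℝ) : (ℕ → A) → ℝ :=
  fun x => ∑ i ∈ Finset.range (H (x 0)).length, V (shift^[i] (substSeq H x))

/-- `t_n(x) = |H^n(x₀)|`. -/
def tlen (H : A → List A) (n : ℕ) (x : ℕ → A) : ℕ := ((wordMap H)^[n] [x 0]).length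

/-- An accident occurs at time `b`. -/
def AccidentAt (u x : ℕ → A) (b : ℕ) : Prop :=
  0 < b ∧ delta u x - b < delta u (shift^[b] x) ∧
    ∀ i < b, delta u (shift^[i] x) = delta u x - i

/-- The first accident time of `x` (junk value `0` if there is none). -/
noncomputable def firstAccident (u x : ℕ → A) : ℕ := sInf {b | AccidentAt u x b}

/-- The `j`-th accident time `B_j` of `x`, defined inductively. -/
noncomputable def accidentTime (u x : ℕ → A) : ℕ → ℕ
  | 0 => 0
  | j + 1 => accidentTime u x j + firstAccident u (shift^[accidentTime u x j] x)

/-- The set of (genuine) accident times of `x`. -/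
def AccidentSet (u x : ℕ → A) : Set ℕ :=
  {B | ∃ j : ℕ, B = accidentTime u x (j + 1) ∧
        AccidentAt u (shift^[accidentTime u x j] x)
          (firstAccident u (shift^[accidentTime u x j] x))}

/-- A word is right special. -/
def RightSpecial (u : ℕ → A) (w : List A) : Prop :=
  ∃ b c : A, b ≠ c ∧ w ++ [b] ∈ Lang u ∧ w ++ [c] ∈ Lang u

/-- A word is left special. -/
def LeftSpecial (u : ℕ → A) (w : List A) : Prop :=
  ∃ a b : A, a ≠ b ∧ a :: w ∈ Lang u ∧ b :: w ∈ Lang u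

/-- A word is bispecial. -/
def Bispecial (u : ℕ → A) (w : List A) : Prop := RightSpecial u w ∧ LeftSpecial u w

/-- `l` is a recognizability constant for `H`: every long enough word of the language
admits a unique desubstitution. -/
def RecogBound (H : A → List A) (u : ℕ → A) (l : ℕ) : Prop :=
  ∀ z ∈ Lang u, l < z.length →
    ∃! d : List A × List A × List A,
      ∃ s p : A,
        z = d.1 ++ wordMap H d.2.1 ++ d.2.2 ∧
        d.2.1 ∈ Lang u ∧
        d.1 <:+ H s ∧ d.1.length < (H s).length ∧
        d.2.2 <+: H p ∧ d.2.2.length < (H p).length ∧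
        ([s] ++ d.2.1 ++ [p]) ∈ Lang u

/-- The incidence matrix of a substitution, with real entries. -/
def incMat [Fintype A] [DecidableEq A] (H : A → List A) : Matrix A A ℝ :=
  fun a b => ((H a).count b : ℝ)

/-- `lam` is the Perron–Frobenius eigenvalue of the incidence matrix of the (primitive)
substitution `H`: it admits an entrywise positive eigenvector. -/
def IsPerronValue [Fintype A] [DecidableEq A] (H : A → List A) (lam : ℝ) : Prop :=
  ∃ v : A → ℝ, (∀ a, 0 < v a) ∧ (incMat H).mulVec v = lam • v

/-- Concatenation of a finite word with an infinite word. -/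
def catWord (S : List A) (y : ℕ → A) : ℕ → A :=
  fun n => S.getD n (y (n - S.length))

section BispecialAux

variable {A : Type*}

theorem wordMap_append' (H : A → List A) (x y : List A) :
    wordMap H (x ++ y) = wordMap H x ++ wordMap H y := by
  simp [wordMap]

theorem wordMap_single' (H : A → List A) (a : A) : wordMap H [a] = H a := by
  simp [wordMap]

theorem wordMap_cons' (H : A → List A) (a : A) (y : List A) :
    wordMap H (a :: y) = H a ++ wordMap H y := by
  simp [wordMap]

theorem length_le_wordMap (H : A → List A) (hne : ∀ a, H a ≠ []) (x : List A) :
    x.length ≤ (wordMap H x).length := by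
  induction x with
  | nil => simp
  | cons a x ih =>
    rw [wordMap_cons', List.length_append, List.length_cons]
    have := List.length_pos_of_ne_nil (hne a)
    omega

theorem length_factorAt (u : ℕ → A) (i n : ℕ) : (factorAt u i n).length = n := by
  simp [factorAt]

theorem factorAt_getElem? (u : ℕ → A) (i n s : ℕ) (hs : s < n) :
    (factorAt u i n)[s]? = some (u (i + s)) := by
  simp [factorAt, hs]

theorem factorAt_add (u : ℕ → A) (i m n : ℕ) :
    factorAt u i (m + n) = factorAt u i m ++ factorAt u (i + m) n := by
  simp [factorAt, List.range_add, Nat.add_assoc]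

theorem factorAt_one (u : ℕ → A) (i : ℕ) : factorAt u i 1 = [u i] := by
  simp [factorAt]

theorem factorAt_inj {u : ℕ → A} {i j n : ℕ} (h : factorAt u i n = factorAt u j n) :
    ∀ s < n, u (i + s) = u (j + s) := by
  intro s hs
  have h1 := factorAt_getElem? u i n s hs
  rw [h, factorAt_getElem? u j n s hs] at h1
  exact (Option.some.inj h1).symm

theorem factorAt_ext {u : ℕ → A} {i j n : ℕ} (h : ∀ s < n, u (i + s) = u (j + s)) :
    factorAt u i n = factorAt u j n := by
  unfold factorAt
  apply List.map_congr_left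
  intro s hs
  exact h s (List.mem_range.mp hs)

theorem prefixWord_eq (u : ℕ → A) (n : ℕ) : prefixWord u n = factorAt u 0 n := by
  simp [prefixWord, factorAt]

theorem factorAt_mem (u : ℕ → A) (i n : ℕ) : factorAt u i n ∈ Lang u :=
  ⟨i, by rw [length_factorAt]⟩

/-- image of an initial word is an initial word -/
theorem fix_initial (H : A → List A) (hne : ∀ a, H a ≠ []) (u : ℕ → A)
    (hu : IsFixedPointSubst H u) (j : ℕ) :
    wordMap H (factorAt u 0 j) = factorAt u 0 (wordMap H (factorAt u 0 j)).length := by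
  apply List.ext_getElem?
  intro n
  by_cases hn : n < (wordMap H (factorAt u 0 j)).length
  · rw [factorAt_getElem? _ _ _ _ hn, zero_add]
    have h1 : u n = (wordMap H (factorAt u 0 (n+1))).getD n (u 0) := by
      have := congrFun hu n
      rw [← this]
      simp only [substSeq]
      rw [← prefixWord_eq]; rfl
    rcases le_total j (n+1) with h | h
    · obtain ⟨d, hd⟩ := Nat.exists_eq_add_of_le h
      rw [hd, factorAt_add, wordMap_append', List.getD_eq_getElem?_getD,
        List.getElem?_append_left hn, List.getElem?_eq_getElem hn] at h1
      rw [List.getElem?_eq_getElem hn, h1]; simp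
    · obtain ⟨d, hd⟩ := Nat.exists_eq_add_of_le h
      have h2 : n < (wordMap H (factorAt u 0 (n+1))).length := by
        have := length_le_wordMap H hne (factorAt u 0 (n+1))
        rw [length_factorAt] at this; omega
      rw [List.getD_eq_getElem?_getD, List.getElem?_eq_getElem h2] at h1
      rw [hd, factorAt_add, wordMap_append', List.getElem?_append_left h2,
        List.getElem?_eq_getElem h2, h1]; simp
  · push Not at hn
    rw [List.getElem?_eq_none hn, List.getElem?_eq_none]
    rw [length_factorAt]; exact hn

/-- cut positions of a substitution -/
def cutPos (K : A → List A) (u : ℕ → A) (j : ℕ) : ℕ := (wordMap K (factorAt u 0 j)).length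

theorem cutPos_add (K : A → List A) (u : ℕ → A) (j n : ℕ) :
    cutPos K u (j + n) = cutPos K u j + (wordMap K (factorAt u j n)).length := by
  simp [cutPos, factorAt_add, wordMap_append']

theorem cutPos_succ (K : A → List A) (u : ℕ → A) (j : ℕ) :
    cutPos K u (j + 1) = cutPos K u j + (K (u j)).length := by
  rw [cutPos_add, factorAt_one, wordMap_single']

theorem cutPos_zero (K : A → List A) (u : ℕ → A) : cutPos K u 0 = 0 := by
  simp [cutPos, factorAt, wordMap]

theorem le_cutPos (K : A → List A) (hne : ∀ a, K a ≠ []) (u : ℕ → A) (j : ℕ) :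
    j ≤ cutPos K u j := by
  have := length_le_wordMap K hne (factorAt u 0 j)
  rwa [length_factorAt] at this

theorem image_factor (K : A → List A) (u : ℕ → A)
    (hK : ∀ j, wordMap K (factorAt u 0 j) = factorAt u 0 (cutPos K u j)) (j n : ℕ) :
    wordMap K (factorAt u j n) =
      factorAt u (cutPos K u j) (wordMap K (factorAt u j n)).length := by
  have h := hK (j + n)
  rw [factorAt_add, wordMap_append', cutPos_add, factorAt_add, hK j, zero_add, zero_add] at h
  exact List.append_cancel_left h

/-- iterate -/
theorem wordMap_iter (H : A → List A) (m : ℕ) (x : List A) :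
    wordMap (fun a => (wordMap H)^[m] [a]) x = (wordMap H)^[m] x := by
  induction m generalizing x with
  | zero => simp [wordMap]
  | succ m ih =>
    rw [Function.iterate_succ_apply', ← ih]
    induction x with
    | nil => simp [wordMap]
    | cons a x ihx =>
      rw [wordMap_cons', ihx, wordMap_cons', wordMap_append', Function.iterate_succ_apply']

theorem iter_append (H : A → List A) (m : ℕ) (x y : List A) :
    (wordMap H)^[m] (x ++ y) = (wordMap H)^[m] x ++ (wordMap H)^[m] y := by
  rw [← wordMap_iter, wordMap_append', wordMap_iter, wordMap_iter]

theorem length_le_iter (H : A → List A) (hne : ∀ a, H a ≠ []) (m : ℕ) (x : List A) :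
    x.length ≤ ((wordMap H)^[m] x).length := by
  induction m with
  | zero => simp
  | succ m ih =>
    rw [Function.iterate_succ_apply']
    exact ih.trans (length_le_wordMap H hne _)

theorem iter_initial (H : A → List A) (hne : ∀ a, H a ≠ []) (u : ℕ → A)
    (hu : IsFixedPointSubst H u) (m j : ℕ) :
    (wordMap H)^[m] (factorAt u 0 j) = factorAt u 0 ((wordMap H)^[m] (factorAt u 0 j)).length := by
  induction m with
  | zero => simp [length_factorAt]
  | succ m ih =>
    rw [Function.iterate_succ_apply', ih]
    exact fix_initial H hne u hu _

/-- uniform recurrence -/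
theorem unif_rec [Fintype A] (H : A → List A) (hne : ∀ a, H a ≠ [])
    (hprim : PrimitiveSubst H) (u : ℕ → A) (hu : IsFixedPointSubst H u)
    (hgrow : ∀ n, ∃ m, n ≤ ((wordMap H)^[m] [u 0]).length) (n : ℕ) :
    ∃ N, ∀ i, ∃ q, i ≤ q ∧ q + n ≤ i + N ∧ ∀ s < n, u (q + s) = u s := by
  obtain ⟨m, hm⟩ := hgrow n
  obtain ⟨k, -, hk⟩ := hprim
  set K : A → List A := fun a => (wordMap H)^[m + k] [a] with hKdef
  have hKne : ∀ a, K a ≠ [] := by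
    intro a h
    have := length_le_iter H hne (m+k) [a]
    simp only [hKdef] at h
    rw [h] at this; simp at this
  have hK : ∀ j, wordMap K (factorAt u 0 j) = factorAt u 0 (cutPos K u j) := by
    intro j
    simp only [cutPos, hKdef, wordMap_iter]
    exact iter_initial H hne u hu _ _
  obtain ⟨Mx, hMx⟩ : ∃ Mx, ∀ a, (K a).length ≤ Mx :=
    ⟨∑ a, (K a).length, fun a => Finset.single_le_sum (f := fun a => (K a).length)
      (fun _ _ => Nat.zero_le _) (Finset.mem_univ a)⟩
  refine ⟨2 * Mx, fun i => ?_⟩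
  have hex : ∃ j, i ≤ cutPos K u j := ⟨i, le_cutPos K hKne u i⟩
  obtain ⟨j, hj1, hj2⟩ : ∃ j, i ≤ cutPos K u j ∧ cutPos K u j ≤ i + Mx := by
    classical
    refine ⟨Nat.find hex, Nat.find_spec hex, ?_⟩
    rcases h : Nat.find hex with _ | j
    · rw [cutPos_zero]; omega
    · have h2 := Nat.find_min hex (m := j) (by omega)
      rw [cutPos_succ]
      have := hMx (u j)
      omega
  -- K (u j) contains the initial word
  have hfac := image_factor K u hK j 1
  rw [factorAt_one, wordMap_single'] at hfac
  have hmem := hk (u j) (u 0)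
  obtain ⟨l1, l2, hl⟩ := List.append_of_mem hmem
  have hKu : K (u j) = (wordMap H)^[m] l1 ++ ((wordMap H)^[m] [u 0] ++ (wordMap H)^[m] l2) := by
    simp only [hKdef]
    rw [Function.iterate_add_apply, hl, ← iter_append, ← iter_append]
    rfl
  have hpre := iter_initial H hne u hu m 1
  rw [factorAt_one] at hpre
  set q0 := ((wordMap H)^[m] l1).length
  have hlen := congrArg List.length hKu
  simp only [List.length_append] at hlen
  have hMj := hMx (u j)
  refine ⟨cutPos K u j + q0, by omega, by omega, fun s hs => ?_⟩
  have h1 := factorAt_getElem? u (cutPos K u j) (K (u j)).length (q0 + s) (by omega)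
  rw [← hfac, hKu, List.getElem?_append_right (by omega), Nat.add_sub_cancel_left,
    List.getElem?_append_left (by omega), hpre, factorAt_getElem? _ _ _ _ (by omega), zero_add] at h1
  rw [Nat.add_assoc]
  exact (Option.some.inj h1).symm

end BispecialAux

section BispecialStates

variable {A : Type*}

/-- block index and offset of a position. -/
def posOf (H : A → List A) (u : ℕ → A) : ℕ → ℕ × ℕ
  | 0 => (0, 0)
  | n + 1 => if (posOf H u n).2 + 1 < (H (u (posOf H u n).1)).length
      then ((posOf H u n).1, (posOf H u n).2 + 1) else ((posOf H u n).1 + 1, 0)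

theorem posOf_lt (H : A → List A) (hne : ∀ a, H a ≠ []) (u : ℕ → A) (n : ℕ) :
    (posOf H u n).2 < (H (u (posOf H u n).1)).length := by
  induction n with
  | zero => exact List.length_pos_of_ne_nil (hne _)
  | succ n ih =>
    rw [posOf]
    split_ifs with h
    · exact h
    · exact List.length_pos_of_ne_nil (hne _)

theorem posOf_cases (H : A → List A) (hne : ∀ a, H a ≠ []) (u : ℕ → A) (n : ℕ) :
    ((posOf H u n).2 + 1 < (H (u (posOf H u n).1)).length ∧
      posOf H u (n + 1) = ((posOf H u n).1, (posOf H u n).2 + 1)) ∨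
    ((posOf H u n).2 + 1 = (H (u (posOf H u n).1)).length ∧
      posOf H u (n + 1) = ((posOf H u n).1 + 1, 0)) := by
  have h0 := posOf_lt H hne u n
  by_cases h : (posOf H u n).2 + 1 < (H (u (posOf H u n).1)).length
  · left; exact ⟨h, by rw [posOf, if_pos h]⟩
  · right; exact ⟨by omega, by rw [posOf, if_neg h]⟩

theorem posOf_cut (H : A → List A) (hne : ∀ a, H a ≠ []) (u : ℕ → A) (n : ℕ) :
    cutPos H u (posOf H u n).1 + (posOf H u n).2 = n := by
  induction n with
  | zero => simp [posOf, cutPos_zero]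
  | succ n ih =>
    rcases posOf_cases H hne u n with ⟨h, e⟩ | ⟨h, e⟩
    · rw [e]; simp only; omega
    · rw [e]; simp only; rw [cutPos_succ]; omega

theorem posOf_mono (H : A → List A) (hne : ∀ a, H a ≠ []) (u : ℕ → A) (n m : ℕ) :
    (posOf H u n).1 ≤ (posOf H u (n + m)).1 := by
  induction m with
  | zero => simp
  | succ m ih =>
    refine ih.trans ?_
    rcases posOf_cases H hne u (n + m) with ⟨h, e⟩ | ⟨h, e⟩
    · rw [← Nat.add_assoc, e]
    · rw [← Nat.add_assoc, e]; simp

/-- State (letter, offset) of a position. -/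
def stOf (H : A → List A) (u : ℕ → A) (n : ℕ) : A × ℕ := (u (posOf H u n).1, (posOf H u n).2)

theorem stOf_letter (H : A → List A) (hne : ∀ a, H a ≠ []) (u : ℕ → A)
    (hu : IsFixedPointSubst H u) (n : ℕ) :
    (H (stOf H u n).1)[(stOf H u n).2]? = some (u n) := by
  have h := image_factor H u (fix_initial H hne u hu) (posOf H u n).1 1
  rw [factorAt_one, wordMap_single'] at h
  simp only [stOf]
  rw [h, factorAt_getElem? _ _ _ _ (posOf_lt H hne u n), posOf_cut H hne u n]

/-- Abstract properties of the state function. -/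
structure StProp (H : A → List A) (u : ℕ → A) (st : ℕ → A × ℕ) : Prop where
  lt : ∀ n, (st n).2 < (H (st n).1).length
  letter : ∀ n, (H (st n).1)[(st n).2]? = some (u n)
  step : ∀ n, (st (n + 1)).2 ≠ 0 → st (n + 1) = ((st n).1, (st n).2 + 1)
  zero_iff : ∀ n, (st (n + 1)).2 = 0 ↔ (st n).2 + 1 = (H (st n).1).length
  head : ∀ a b : A, (H a)[0]? = (H b)[0]? → a = b
  last : ∀ a b : A, (H a)[(H a).length - 1]? = (H b)[(H b).length - 1]? → a = b

theorem marked_head (H : A → List A) (hne : ∀ a, H a ≠ []) (hm : MarkedSubst H hne) (a b : A)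
    (h : (H a)[0]? = (H b)[0]?) : a = b := by
  apply hm.1
  simp only
  rw [← List.head?_eq_getElem?, ← List.head?_eq_getElem?, List.head?_eq_some_head (hne a),
    List.head?_eq_some_head (hne b)] at h
  exact Option.some.inj h

theorem marked_last (H : A → List A) (hne : ∀ a, H a ≠ []) (hm : MarkedSubst H hne) (a b : A)
    (h : (H a)[(H a).length - 1]? = (H b)[(H b).length - 1]?) : a = b := by
  apply hm.2
  simp only
  rw [← List.getLast?_eq_getElem?, ← List.getLast?_eq_getElem?, List.getLast?_eq_some_getLast (hne a),
    List.getLast?_eq_some_getLast (hne b)] at h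
  exact Option.some.inj h

theorem stOf_prop (H : A → List A) (hne : ∀ a, H a ≠ []) (u : ℕ → A)
    (hu : IsFixedPointSubst H u) (hm : MarkedSubst H hne) : StProp H u (stOf H u) where
  lt := posOf_lt H hne u
  letter := stOf_letter H hne u hu
  step := by
    intro n h
    simp only [stOf] at h ⊢
    rcases posOf_cases H hne u n with ⟨_, e⟩ | ⟨_, e⟩
    · rw [e]
    · rw [e] at h; simp at h
  zero_iff := by
    intro n
    simp only [stOf]
    rcases posOf_cases H hne u n with ⟨h, e⟩ | ⟨h, e⟩
    · rw [e]; simp only; omega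
    · rw [e]; exact ⟨fun _ => h, fun _ => rfl⟩
  head := marked_head H hne hm
  last := marked_last H hne hm

variable {H : A → List A} {u : ℕ → A} {st : ℕ → A × ℕ}

theorem StProp.eq_letter (hs : StProp H u st) {x y : ℕ} (h : st x = st y) : u x = u y := by
  have h1 := hs.letter x
  rw [h, hs.letter y] at h1
  exact (Option.some.inj h1).symm

theorem StProp.eq_of_zero (hs : StProp H u st) {x y : ℕ} (hx : (st x).2 = 0) (hy : (st y).2 = 0)
    (h : u x = u y) : st x = st y := by
  have h1 := hs.letter x
  have h2 := hs.letter y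
  rw [hx] at h1; rw [hy] at h2
  exact Prod.ext (hs.head _ _ (by rw [h1, h2, h])) (by rw [hx, hy])

theorem StProp.eq_of_last (hs : StProp H u st) {x y : ℕ} (hx : (st (x+1)).2 = 0)
    (hy : (st (y+1)).2 = 0) (h : u x = u y) : st x = st y := by
  rw [hs.zero_iff] at hx hy
  have h1 := hs.letter x
  have h2 := hs.letter y
  have e1 : (st x).2 = (H (st x).1).length - 1 := by omega
  have e2 : (st y).2 = (H (st y).1).length - 1 := by omega
  rw [e1] at h1; rw [e2] at h2
  have e3 := hs.last (st x).1 (st y).1 (by rw [h1, h2, h])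
  exact Prod.ext e3 (by rw [e1, e2, e3])

theorem StProp.succ_zero (hs : StProp H u st) {x y : ℕ} (h : st x = st y) :
    (st (x+1)).2 = 0 ↔ (st (y+1)).2 = 0 := by
  rw [hs.zero_iff, hs.zero_iff, h]

theorem StProp.succ_eq (hs : StProp H u st) {x y : ℕ} (h : st x = st y) (h0 : (st (x+1)).2 ≠ 0) :
    st (x+1) = st (y+1) := by
  rw [hs.step x h0, hs.step y (fun h' => h0 ((hs.succ_zero h).mpr h')), h]

theorem StProp.pred_eq (hs : StProp H u st) {x y : ℕ} (h : st (x+1) = st (y+1))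
    (h0 : (st (x+1)).2 ≠ 0) : st x = st y := by
  have h1 := hs.step x h0
  have h2 := hs.step y (by rwa [← h])
  rw [h1, h2] at h
  simp only [Prod.mk.injEq, Nat.add_right_cancel_iff] at h
  exact Prod.ext h.1 h.2

/-- Forward propagation. -/
theorem StProp.forward (hs : StProp H u st) {i i' L t : ℕ}
    (hag : ∀ s < L, u (i + s) = u (i' + s)) (h1 : (st (i + t)).2 = 0) (h2 : (st (i' + t)).2 = 0)
    (d : ℕ) (hd : t + d ≤ L) : st (i + (t + d)) = st (i' + (t + d)) ∨
      ((st (i + (t + d))).2 = 0 ∧ (st (i' + (t + d))).2 = 0) := by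
  induction d with
  | zero => right; exact ⟨h1, h2⟩
  | succ d ih =>
    have e : st (i + (t + d)) = st (i' + (t + d)) := by
      rcases ih (by omega) with h | ⟨h, h'⟩
      · exact h
      · exact hs.eq_of_zero h h' (hag _ (by omega))
    by_cases h0 : (st (i + (t + d) + 1)).2 = 0
    · right; exact ⟨h0, (hs.succ_zero e).mp h0⟩
    · left; exact hs.succ_eq e h0

/-- Backward propagation. -/
theorem StProp.backward (hs : StProp H u st) {i i' L : ℕ}
    (hag : ∀ s < L, u (i + s) = u (i' + s)) (d s : ℕ) (hd : s + d ≤ L)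
    (h1 : (st (i + (s + d))).2 = 0) (h2 : (st (i' + (s + d))).2 = 0)
     : st (i + s) = st (i' + s) ∨
      ((st (i + s)).2 = 0 ∧ (st (i' + s)).2 = 0) := by
  induction d generalizing s with
  | zero => right; exact ⟨h1, h2⟩
  | succ d ih =>
    rcases ih (s + 1) (by omega) (by rwa [show s + 1 + d = s + (d + 1) by omega])
        (by rwa [show s + 1 + d = s + (d + 1) by omega]) with h | ⟨h, h'⟩
    · by_cases h0 : (st (i + s + 1)).2 = 0
      · left
        exact hs.eq_of_last h0 (by rw [Nat.add_assoc, ← h]; exact h0) (hag _ (by omega))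
      · left; exact hs.pred_eq h h0
    · left; exact hs.eq_of_last h h' (hag _ (by omega))

/-- Synchronisation: there is a common cut in long repeated words. -/
theorem StProp.sync [Fintype A] (hs : StProp H u st)
    (hrec : ∀ n, ∃ N, ∀ i, ∃ q, i ≤ q ∧ q + n ≤ i + N ∧ ∀ s < n, u (q + s) = u s)
    (hnp : ¬ PeriodicSeq u) :
    ∃ N, ∀ i i' L, N ≤ L → (∀ s < L, u (i + s) = u (i' + s)) →
      ∃ t ≤ L, (st (i + t)).2 = 0 ∧ (st (i' + t)).2 = 0 := by
  classical
  obtain ⟨B, hB⟩ : ∃ B, ∀ a, (H a).length ≤ B :=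
    ⟨∑ a, (H a).length, fun a => Finset.single_le_sum (f := fun a => (H a).length)
      (fun _ _ => Nat.zero_le _) (Finset.mem_univ a)⟩
  set S : Finset ((A × ℕ) × (A × ℕ)) :=
    (Finset.univ ×ˢ Finset.range B) ×ˢ (Finset.univ ×ˢ Finset.range B) with hS
  have hmem : ∀ x y, (st x, st y) ∈ S := by
    intro x y
    have h1 := (hs.lt x).trans_le (hB _)
    have h2 := (hs.lt y).trans_le (hB _)
    simp [hS, h1, h2]
  set Q := S.card
  have hP : 0 < Q.factorial := Nat.factorial_pos _
  obtain ⟨n0, hn0⟩ : ∃ n, u (n + Q.factorial) ≠ u n := by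
    by_contra hcon
    push Not at hcon
    exact hnp ⟨_, hP, hcon⟩
  obtain ⟨N1, hN1⟩ := hrec (n0 + Q.factorial + 1)
  refine ⟨Q + N1 + 1, fun i i' L hL hag => ?_⟩
  by_contra hcon
  push Not at hcon
  -- pigeonhole
  obtain ⟨s1, hs1, s2, hs2, hne12, heq⟩ :=
    Finset.exists_ne_map_eq_of_card_lt_of_maps_to (s := Finset.range (Q + 1)) (t := S)
      (f := fun s => (st (i + s), st (i' + s))) (by simp [Q]) (fun s _ => hmem _ _)
  wlog hlt : s1 < s2 generalizing s1 s2 with hw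
  · exact hw s2 hs2 s1 hs1 hne12.symm heq.symm (by omega)
  simp only [Finset.mem_range] at hs1 hs2
  simp only [Prod.mk.injEq] at heq
  have hprop : ∀ t, s2 + t < L → st (i + (s1 + t)) = st (i + (s2 + t)) ∧
      st (i' + (s1 + t)) = st (i' + (s2 + t)) := by
    intro t
    induction t with
    | zero => intro _; exact heq
    | succ t ih =>
      intro ht
      obtain ⟨e1, e2⟩ := ih (by omega)
      have c1 := hcon (s1 + t + 1) (by omega)
      by_cases z : (st (i + (s1 + t) + 1)).2 = 0
      · have z' : (st (i' + (s1 + t) + 1)).2 ≠ 0 := c1 z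
        have f2 := hs.succ_eq e2 z'
        refine ⟨hs.eq_of_zero z ((hs.succ_zero e1).mp z) ?_, f2⟩
        have a1 := hag (s1 + t + 1) (by omega)
        have a2 := hag (s2 + t + 1) (by omega)
        have a3 := hs.eq_letter f2
        exact a1.trans (a3.trans a2.symm)
      · have f1 := hs.succ_eq e1 z
        refine ⟨f1, ?_⟩
        by_cases z' : (st (i' + (s1 + t) + 1)).2 = 0
        · refine hs.eq_of_zero z' ((hs.succ_zero e2).mp z') ?_
          have a1 := hag (s1 + t + 1) (by omega)
          have a2 := hag (s2 + t + 1) (by omega)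
          have a3 := hs.eq_letter f1
          exact a1.symm.trans (a3.trans a2)
        · exact hs.succ_eq e2 z'
  obtain ⟨p, hp⟩ := Nat.exists_eq_add_of_lt hlt
  have hper : ∀ x, s1 ≤ x → x + (p + 1) < L → u (i + x) = u (i + (x + (p + 1))) := by
    intro x hx hxL
    obtain ⟨t, rfl⟩ := Nat.exists_eq_add_of_le hx
    have := hs.eq_letter (hprop t (by omega)).1
    rw [this]; congr 1; omega
  have hperm : ∀ m x, s1 ≤ x → x + m * (p + 1) < L → u (i + x) = u (i + (x + m * (p + 1))) := by
    intro m
    induction m with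
    | zero => intro x _ _; simp
    | succ m ih =>
      intro x hx hxL
      have e : x + (m + 1) * (p + 1) = x + m * (p + 1) + (p + 1) := by ring
      rw [e] at hxL ⊢
      rw [ih x hx (by omega), hper _ (by omega) hxL]
  have hdvd : (p + 1) ∣ Q.factorial := Nat.dvd_factorial (by omega) (by omega)
  obtain ⟨m, hm⟩ := hdvd
  obtain ⟨q, hq1, hq2, hq3⟩ := hN1 (i + Q)
  obtain ⟨r, hr⟩ := Nat.exists_eq_add_of_le hq1
  have k1 := hq3 n0 (by omega)
  have k2 := hq3 (n0 + Q.factorial) (by omega)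
  have hmm : m * (p + 1) = Q.factorial := by rw [hm]; ring
  have k3 := hperm m (Q + r + n0) (by omega) (by omega)
  rw [hmm] at k3
  apply hn0
  rw [← k1, ← k2, show q + (n0 + Q.factorial) = i + (Q + r + n0 + Q.factorial) by omega, ← k3]
  congr 1; omega

/-- All cuts agree. -/
theorem StProp.sync_all (hs : StProp H u st) {N : ℕ}
    (hN : ∀ i i' L, N ≤ L → (∀ s < L, u (i + s) = u (i' + s)) →
      ∃ t ≤ L, (st (i + t)).2 = 0 ∧ (st (i' + t)).2 = 0)
    {i i' L : ℕ} (hL : N ≤ L) (hag : ∀ s < L, u (i + s) = u (i' + s)) (s : ℕ) (hsL : s ≤ L) :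
    st (i + s) = st (i' + s) ∨ ((st (i + s)).2 = 0 ∧ (st (i' + s)).2 = 0) := by
  obtain ⟨t, ht, h1, h2⟩ := hN i i' L hL hag
  rcases le_total t s with h | h
  · obtain ⟨d, rfl⟩ := Nat.exists_eq_add_of_le h
    exact hs.forward hag h1 h2 d hsL
  · obtain ⟨d, rfl⟩ := Nat.exists_eq_add_of_le h
    exact hs.backward hag d s ht h1 h2

theorem wordMap_inj (H : A → List A) (hne : ∀ a, H a ≠ []) (hm : MarkedSubst H hne) :
    ∀ x y : List A, wordMap H x = wordMap H y → x = y := by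
  intro x
  induction x with
  | nil =>
    intro y h
    cases y with
    | nil => rfl
    | cons b y => rw [wordMap_cons'] at h; simp [wordMap, hne] at h
  | cons a x ih =>
    intro y h
    cases y with
    | nil => rw [wordMap_cons'] at h; simp [wordMap, hne] at h
    | cons b y =>
      rw [wordMap_cons', wordMap_cons'] at h
      have hab : a = b := by
        apply marked_head H hne hm
        have := congrArg (fun l => l[0]?) h
        rwa [List.getElem?_append_left (List.length_pos_of_ne_nil (hne a)),
          List.getElem?_append_left (List.length_pos_of_ne_nil (hne b))] at this
      subst hab
      rw [ih y (List.append_cancel_left h)]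

/-- Desubstitution between two cuts -/
theorem desub (H : A → List A) (hne : ∀ a, H a ≠ []) (u : ℕ → A)
    (hu : IsFixedPointSubst H u) (i L : ℕ) (h1 : (posOf H u i).2 = 0)
    (h2 : (posOf H u (i + L)).2 = 0) :
    wordMap H (factorAt u (posOf H u i).1 ((posOf H u (i + L)).1 - (posOf H u i).1))
      = factorAt u i L := by
  have hmono := posOf_mono H hne u i L
  have c1 := posOf_cut H hne u i
  have c2 := posOf_cut H hne u (i + L)
  obtain ⟨n, hn⟩ := Nat.exists_eq_add_of_le hmono
  rw [h1, Nat.add_zero] at c1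
  rw [h2, Nat.add_zero, hn, cutPos_add, c1] at c2
  rw [hn, Nat.add_sub_cancel_left, image_factor H u (fix_initial H hne u hu), c1]
  congr 1; omega

theorem mem_right {u : ℕ → A} {w : List A} {b : A} (h : w ++ [b] ∈ Lang u) :
    ∃ i, factorAt u i w.length = w ∧ u (i + w.length) = b := by
  obtain ⟨i, hi⟩ := h
  rw [List.length_append, List.length_singleton, factorAt_add, factorAt_one] at hi
  have := List.append_inj' hi rfl
  exact ⟨i, this.1.symm, by simpa using this.2.symm⟩

theorem mem_left {u : ℕ → A} {w : List A} {b : A} (h : b :: w ∈ Lang u) :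
    ∃ i, factorAt u (i + 1) w.length = w ∧ u i = b := by
  obtain ⟨i, hi⟩ := h
  rw [List.length_cons, Nat.add_comm, factorAt_add, factorAt_one] at hi
  simp only [List.singleton_append, List.cons.injEq] at hi
  exact ⟨i, hi.2.symm, hi.1.symm⟩

theorem bispecial_desub [Fintype A] (H : A → List A) (hne : ∀ a, H a ≠ []) (u : ℕ → A)
    (hu : IsFixedPointSubst H u) (hm : MarkedSubst H hne)
    (hrec : ∀ n, ∃ N, ∀ i, ∃ q, i ≤ q ∧ q + n ≤ i + N ∧ ∀ s < n, u (q + s) = u s)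
    (hnp : ¬ PeriodicSeq u) :
    ∃ N, ∀ w, Bispecial u w → N ≤ w.length → ∃ v, Bispecial u v ∧ w = wordMap H v := by
  have hs := stOf_prop H hne u hu hm
  obtain ⟨N, hN⟩ := hs.sync hrec hnp
  refine ⟨N, fun w hw hL => ?_⟩
  obtain ⟨⟨b, c, hbc, hb, hc⟩, ⟨a, d, had, ha, hd⟩⟩ := hw
  obtain ⟨i1, e1, f1⟩ := mem_right hb
  obtain ⟨i2, e2, f2⟩ := mem_right hc
  obtain ⟨i3, e3, f3⟩ := mem_left ha
  obtain ⟨i4, e4, f4⟩ := mem_left hd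
  set L := w.length with hLdef
  have sy : ∀ i i', factorAt u i L = w → factorAt u i' L = w → ∀ s ≤ L,
      stOf H u (i + s) = stOf H u (i' + s) ∨
        ((stOf H u (i + s)).2 = 0 ∧ (stOf H u (i' + s)).2 = 0) := by
    intro i i' h h'
    exact hs.sync_all hN hL (factorAt_inj (h.trans h'.symm))
  have zr : (stOf H u (i1 + L)).2 = 0 := by
    rcases sy i1 i2 e1 e2 L le_rfl with h | h
    · exact absurd (hs.eq_letter h) (by rw [f1, f2]; exact hbc)
    · exact h.1
  have zl : (stOf H u (i3 + 1 + 0)).2 = 0 := by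
    rcases sy (i3 + 1) (i4 + 1) e3 e4 0 (Nat.zero_le _) with h | h
    · by_contra h0
      have := hs.eq_letter (hs.pred_eq h h0)
      rw [f3, f4] at this
      exact had this
    · exact h.1
  have zero_all : ∀ i, factorAt u i L = w → (posOf H u i).2 = 0 ∧ (posOf H u (i + L)).2 = 0 := by
    intro i hi
    constructor
    · rcases sy (i3 + 1) i e3 hi 0 (Nat.zero_le _) with h | h
      · rw [h] at zl; exact zl
      · exact h.2
    · rcases sy i1 i e1 hi L le_rfl with h | h
      · rw [h] at zr; exact zr
      · exact h.2
  -- the desubstituted words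
  have des : ∀ i, factorAt u i L = w → wordMap H (factorAt u (posOf H u i).1
      ((posOf H u (i + L)).1 - (posOf H u i).1)) = w := by
    intro i hi
    rw [desub H hne u hu i L (zero_all i hi).1 (zero_all i hi).2, hi]
  set v := factorAt u (posOf H u i1).1 ((posOf H u (i1 + L)).1 - (posOf H u i1).1) with hv
  have hvw : wordMap H v = w := des i1 e1
  have veq : ∀ i, factorAt u i L = w → factorAt u (posOf H u i).1
      ((posOf H u (i + L)).1 - (posOf H u i).1) = v := by
    intro i hi
    exact wordMap_inj H hne hm _ _ ((des i hi).trans hvw.symm)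
  have right_ext : ∀ i, factorAt u i L = w → v ++ [u (posOf H u (i + L)).1] ∈ Lang u ∧
      (H (u (posOf H u (i + L)).1))[0]? = some (u (i + L)) := by
    intro i hi
    constructor
    · have hmono := posOf_mono H hne u i L
      obtain ⟨n, hn⟩ := Nat.exists_eq_add_of_le hmono
      have := factorAt_mem u (posOf H u i).1 (n + 1)
      rw [factorAt_add, factorAt_one, ← hn] at this
      rw [← veq i hi, hn, Nat.add_sub_cancel_left, ← hn]
      exact this
    · have := hs.letter (i + L)
      simp only [stOf] at this
      rwa [(zero_all i hi).2] at this
  have left_ext : ∀ i, factorAt u (i + 1) L = w → u (posOf H u i).1 :: v ∈ Lang u ∧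
      (H (u (posOf H u i).1))[(H (u (posOf H u i).1)).length - 1]? = some (u i) := by
    intro i hi
    have z := (zero_all _ hi).1
    rcases posOf_cases H hne u i with ⟨h, e⟩ | ⟨h, e⟩
    · rw [e] at z; simp at z
    · constructor
      · rw [← veq _ hi]
        set m := (posOf H u (i + 1 + L)).1 - (posOf H u (i + 1)).1
        have := factorAt_mem u (posOf H u i).1 (1 + m)
        rw [factorAt_add, factorAt_one] at this
        rw [e]
        exact this
      · have := hs.letter i
        simp only [stOf] at this
        rw [← h, Nat.add_sub_cancel]
        exact this
  refine ⟨v, ⟨⟨_, _, ?_, (right_ext i1 e1).1, (right_ext i2 e2).1⟩,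
    ⟨_, _, ?_, (left_ext i3 e3).1, (left_ext i4 e4).1⟩⟩, hvw.symm⟩
  · intro h
    have h1 := (right_ext i1 e1).2
    rw [h, (right_ext i2 e2).2, f1, f2] at h1
    exact hbc (Option.some.inj h1).symm
  · intro h
    have h1 := (left_ext i3 e3).2
    rw [h, (left_ext i4 e4).2, f3, f4] at h1
    exact had (Option.some.inj h1).symm

end BispecialStates

section BispecialPerron

variable {A : Type*}

/-- Convergence of stochastic averages at an exponential rate. -/
theorem stoch_conv [Fintype A] [Nonempty A] (f : ℕ → A → ℝ) (p : ℕ → A → A → ℝ)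
    (hp0 : ∀ m a b, 0 ≤ p m a b) (hp1 : ∀ m a, ∑ b, p m a b = 1)
    (hf : ∀ n m a, f (n + m) a = ∑ b, p m a b * f n b)
    (k : ℕ) (hk : 0 < k) (δ : ℝ) (hδ : 0 < δ) (hδp : ∀ a b, δ ≤ p k a b)
    (hpos : ∀ a, 0 < f 0 a) :
    ∃ c K ρ : ℝ, 0 < c ∧ 0 ≤ K ∧ 0 < ρ ∧ ρ < 1 ∧ ∀ n a, |f n a - c| ≤ K * ρ ^ n := by
  classical
  have hδ1 : δ ≤ 1 := by
    have a : A := Classical.arbitrary A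
    calc δ ≤ p k a a := hδp a a
      _ ≤ ∑ b, p k a b := Finset.single_le_sum (f := fun b => p k a b)
          (fun b _ => hp0 k a b) (Finset.mem_univ a)
      _ = 1 := hp1 k a
  have hdiff : ∀ n m a (x : ℝ), f (n + m) a - x = ∑ b, p m a b * (f n b - x) := by
    intro n m a x
    simp only [mul_sub, Finset.sum_sub_distrib, ← Finset.sum_mul, hp1, one_mul, ← hf]
  have hle : ∀ n m a (x d : ℝ), (∀ b, f n b - x ≤ d) → f (n + m) a - x ≤ d := by
    intro n m a x d h
    rw [hdiff]
    calc ∑ b, p m a b * (f n b - x) ≤ ∑ b, p m a b * d :=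
          Finset.sum_le_sum fun b _ => mul_le_mul_of_nonneg_left (h b) (hp0 m a b)
      _ = d := by rw [← Finset.sum_mul, hp1, one_mul]
  have hge : ∀ n m a (x d : ℝ), (∀ b, d ≤ f n b - x) → d ≤ f (n + m) a - x := by
    intro n m a x d h
    rw [hdiff]
    calc d = ∑ b, p m a b * d := by rw [← Finset.sum_mul, hp1, one_mul]
      _ ≤ ∑ b, p m a b * (f n b - x) :=
          Finset.sum_le_sum fun b _ => mul_le_mul_of_nonneg_left (h b) (hp0 m a b)
  have hosc1 : ∀ n m d, (∀ a b, f n a - f n b ≤ d) → ∀ a b, |f (n + m) a - f n b| ≤ d := by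
    intro n m d h a b
    rw [abs_le]
    refine ⟨hge n m a _ _ fun c => ?_, hle n m a _ _ fun c => h c b⟩
    linarith [h b c]
  have hosc2 : ∀ n m d, (∀ a b, f n a - f n b ≤ d) → ∀ a b, f (n + m) a - f (n + m) b ≤ d := by
    intro n m d h a b
    refine hle n m a _ _ fun c => ?_
    have := (abs_le.mp (hosc1 n m d h b c)).1
    linarith
  set ε : ℝ := 1 - δ / 2 with hε
  have hε0 : 0 < ε := by rw [hε]; linarith
  have hε1 : ε < 1 := by rw [hε]; linarith
  have hosck : ∀ n d, (∀ a b, f n a - f n b ≤ d) →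
      ∀ a b, f (n + k) a - f (n + k) b ≤ ε * d := by
    intro n d h a b
    obtain ⟨x, hx⟩ := Finite.exists_max (f n)
    obtain ⟨y, hy⟩ := Finite.exists_min (f n)
    have h1 : f (n + k) a - f n x ≤ δ * (f n y - f n x) := by
      rw [hdiff]
      calc ∑ b, p k a b * (f n b - f n x) ≤ p k a y * (f n y - f n x) := by
            rw [← Finset.add_sum_erase _ _ (Finset.mem_univ y)]
            have : ∑ b ∈ Finset.univ.erase y, p k a b * (f n b - f n x) ≤ 0 :=
              Finset.sum_nonpos fun b _ => mul_nonpos_of_nonneg_of_nonpos (hp0 k a b)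
                (by linarith [hx b])
            linarith
        _ ≤ δ * (f n y - f n x) :=
            mul_le_mul_of_nonpos_right (hδp a y) (by linarith [hx y])
    have h2 : 0 ≤ f (n + k) b - f n y := hge n k b _ _ fun c => by linarith [hy c]
    have h3 := h x y
    have h4 := hx y
    have h5 : f (n + k) a - f (n + k) b ≤ (1 - δ) * (f n x - f n y) := by nlinarith
    have h6 : (1 - δ) * (f n x - f n y) ≤ (1 - δ) * d :=
      mul_le_mul_of_nonneg_left h3 (by linarith)
    have h7 : (1 - δ) * d ≤ ε * d := mul_le_mul_of_nonneg_right (by rw [hε]; linarith)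
      (by linarith)
    linarith
  obtain ⟨D, hD0, hD⟩ : ∃ D, 0 ≤ D ∧ ∀ a b, f 0 a - f 0 b ≤ D := by
    obtain ⟨x, hx⟩ := Finite.exists_max (f 0)
    obtain ⟨y, hy⟩ := Finite.exists_min (f 0)
    exact ⟨f 0 x - f 0 y, by linarith [hx y], fun a b => by linarith [hx a, hy b]⟩
  have hq : ∀ q, ∀ a b, f (k * q) a - f (k * q) b ≤ ε ^ q * D := by
    intro q
    induction q with
    | zero => simpa using hD
    | succ q ih =>
      intro a b
      have := hosck (k * q) _ ih a b
      rw [Nat.mul_succ, pow_succ]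
      linarith
  set ρ : ℝ := ε ^ ((k : ℝ)⁻¹) with hρ
  have hρ0 : 0 < ρ := Real.rpow_pos_of_pos hε0 _
  have hρk : ρ ^ k = ε := Real.rpow_inv_natCast_pow hε0.le hk.ne'
  have hρ1 : ρ < 1 := Real.rpow_lt_one hε0.le hε1 (by positivity)
  set K : ℝ := D / ε with hK
  have hK0 : 0 ≤ K := div_nonneg hD0 hε0.le
  have hn : ∀ n a b, f n a - f n b ≤ K * ρ ^ n := by
    intro n a b
    have e : k * (n / k) + n % k = n := Nat.div_add_mod n k
    have h1 := hosc2 (k * (n / k)) (n % k) _ (hq (n / k)) a b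
    rw [e] at h1
    refine h1.trans ?_
    have h2 : ρ ^ n = ε ^ (n / k) * ρ ^ (n % k) := by
      conv_lhs => rw [← e]
      rw [pow_add, pow_mul, hρk]
    have h3 : ε ≤ ρ ^ (n % k) := by
      rw [← hρk]
      exact pow_le_pow_of_le_one hρ0.le hρ1.le (Nat.mod_lt n hk).le
    rw [h2, hK, div_mul_eq_mul_div, le_div_iff₀ hε0]
    have h4 : 0 ≤ ε ^ (n / k) * D := by positivity
    nlinarith
  have hnm : ∀ n m a b, |f (n + m) a - f n b| ≤ K * ρ ^ n := fun n m a b =>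
    hosc1 n m _ (hn n) a b
  have a0 : A := Classical.arbitrary A
  have hlim0 : Tendsto (fun n => K * ρ ^ n) atTop (𝓝 0) := by
    simpa using (tendsto_pow_atTop_nhds_zero_of_lt_one hρ0.le hρ1).const_mul K
  have hcau : CauchySeq (fun n => f n a0) := by
    refine cauchySeq_of_le_tendsto_0 (fun n => 2 * (K * ρ ^ n)) ?_ ?_
    · intro n m N hN hM
      obtain ⟨n', rfl⟩ := Nat.exists_eq_add_of_le hN
      obtain ⟨m', rfl⟩ := Nat.exists_eq_add_of_le hM
      rw [Real.dist_eq]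
      have h1 := abs_le.mp (hnm N n' a0 a0)
      have h2 := abs_le.mp (hnm N m' a0 a0)
      rw [abs_le]
      constructor <;> linarith [h1.1, h1.2, h2.1, h2.2]
    · simpa using hlim0.const_mul 2
  obtain ⟨c, hc⟩ := cauchySeq_tendsto_of_complete hcau
  refine ⟨c, K, ρ, ?_, hK0, hρ0, hρ1, ?_⟩
  · obtain ⟨y, hy⟩ := Finite.exists_min (f 0)
    refine (hpos y).trans_le (ge_of_tendsto' hc fun n => ?_)
    have := hge 0 n a0 0 (f 0 y) fun b => by simpa using hy b
    simpa using this
  · intro n a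
    have h1 : Tendsto (fun m => |f (n + m) a0 - f n a|) atTop (𝓝 |c - f n a|) := by
      have : Tendsto (fun m => f (n + m) a0) atTop (𝓝 c) := by
        simpa [Nat.add_comm] using (tendsto_add_atTop_iff_nat n).mpr hc
      exact (this.sub_const _).abs
    rw [abs_sub_comm]
    exact le_of_tendsto' h1 fun m => hnm n m a0 a

/-- weight of a word -/
def wt (v : A → ℝ) (w : List A) : ℝ := (w.map v).sum

theorem wt_append (v : A → ℝ) (x y : List A) : wt v (x ++ y) = wt v x + wt v y := by
  simp [wt]

theorem wt_single (v : A → ℝ) (a : A) : wt v [a] = v a := by simp [wt]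

theorem wt_nil (v : A → ℝ) : wt v [] = 0 := by simp [wt]

theorem wt_cons (v : A → ℝ) (a : A) (w : List A) : wt v (a :: w) = v a + wt v w := by simp [wt]

theorem wt_count [Fintype A] [DecidableEq A] (v : A → ℝ) (w : List A) :
    wt v w = ∑ b, (w.count b : ℝ) * v b := by
  induction w with
  | nil => simp [wt]
  | cons a w ih =>
    rw [wt_cons, ih]
    simp only [List.count_cons, Nat.cast_add, add_mul, Finset.sum_add_distrib]
    rw [add_comm]
    congr 1
    simp

theorem wt_nonneg (v : A → ℝ) (hv : ∀ a, 0 < v a) (w : List A) : 0 ≤ wt v w := by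
  induction w with
  | nil => simp [wt]
  | cons a w ih => rw [wt_cons]; linarith [hv a]

theorem wt_le_length [Fintype A] (v : A → ℝ) (hv : ∀ a, 0 < v a) (w : List A) :
    wt v w ≤ w.length * ∑ a, v a := by
  induction w with
  | nil => simp [wt]
  | cons a w ih =>
    rw [wt_cons, List.length_cons]
    have := Finset.single_le_sum (f := v) (fun b _ => (hv b).le) (Finset.mem_univ a)
    push_cast
    linarith

theorem wt_wordMap [Fintype A] [DecidableEq A] (H : A → List A) (v : A → ℝ) (lam : ℝ)
    (h : (incMat H).mulVec v = lam • v) (w : List A) : wt v (wordMap H w) = lam * wt v w := by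
  induction w with
  | nil => simp [wt, wordMap]
  | cons a w ih =>
    rw [wordMap_cons', wt_append, ih, wt_cons, wt_count]
    have := congrFun h a
    simp only [Matrix.mulVec, dotProduct, incMat, Pi.smul_apply, smul_eq_mul] at this
    rw [this]; ring

theorem wt_iter [Fintype A] [DecidableEq A] (H : A → List A) (v : A → ℝ) (lam : ℝ)
    (h : (incMat H).mulVec v = lam • v) (n : ℕ) (w : List A) :
    wt v ((wordMap H)^[n] w) = lam ^ n * wt v w := by
  induction n with
  | zero => simp
  | succ n ih => rw [Function.iterate_succ_apply', wt_wordMap H v lam h, ih]; ring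

theorem length_iter (H : A → List A) (n : ℕ) (w : List A) :
    (((wordMap H)^[n] w).length : ℝ) = wt (fun b => (((wordMap H)^[n] [b]).length : ℝ)) w := by
  induction w with
  | nil =>
    have : (wordMap H)^[n] [] = [] := by
      rw [← wordMap_iter]; simp [wordMap]
    simp [wt, this]
  | cons a w ih =>
    rw [wt_cons, ← ih, show a :: w = [a] ++ w from rfl, iter_append, List.length_append]
    push_cast; rfl

theorem lam_gt_one [Fintype A] [DecidableEq A] [Nontrivial A] (H : A → List A)
    (hne : ∀ a, H a ≠ []) (hprim : PrimitiveSubst H) (v : A → ℝ) (hv : ∀ a, 0 < v a) (lam : ℝ)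
    (h : (incMat H).mulVec v = lam • v) : 1 < lam := by
  obtain ⟨a, b, hab⟩ := exists_pair_ne A
  obtain ⟨k, hk, hkp⟩ := hprim
  have hl0 : 0 ≤ lam := by
    have h1 := wt_wordMap H v lam h [a]
    have h2 := wt_nonneg v hv (wordMap H [a])
    rw [h1, wt_single] at h2
    exact nonneg_of_mul_nonneg_left h2 (hv a)
  have h1 := wt_iter H v lam h k [a]
  rw [wt_single, wt_count] at h1
  have h2 : v a + v b ≤ ∑ c, (((wordMap H)^[k] [a]).count c : ℝ) * v c := by
    rw [← Finset.sum_pair hab]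
    calc ∑ c ∈ {a, b}, v c ≤ ∑ c ∈ {a, b}, (((wordMap H)^[k] [a]).count c : ℝ) * v c := by
          refine Finset.sum_le_sum fun c _ => ?_
          have : (1 : ℝ) ≤ (((wordMap H)^[k] [a]).count c : ℝ) := by
            exact_mod_cast List.count_pos_iff.mpr (hkp a c)
          nlinarith [hv c]
      _ ≤ _ := Finset.sum_le_sum_of_subset_of_nonneg (Finset.subset_univ _)
          fun c _ _ => mul_nonneg (Nat.cast_nonneg _) (hv c).le
  by_contra hcon
  have h3 : lam ^ k ≤ 1 := pow_le_one₀ hl0 (not_lt.mp hcon)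
  nlinarith [hv a, hv b]

theorem perron_asymp [Fintype A] [DecidableEq A] [Nonempty A] (H : A → List A)
    (hne : ∀ a, H a ≠ []) (hprim : PrimitiveSubst H) (v : A → ℝ) (hv : ∀ a, 0 < v a) (lam : ℝ)
    (h : (incMat H).mulVec v = lam • v) (hlam : 1 < lam) :
    ∃ c K θ : ℝ, 0 < c ∧ 0 ≤ K ∧ 0 < θ ∧ θ < lam ∧ ∀ (n : ℕ) (w : List A),
      |(((wordMap H)^[n] w).length : ℝ) - c * wt v w * lam ^ n| ≤ K * wt v w * θ ^ n := by
  obtain ⟨k, hk, hkp⟩ := hprim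
  have hl0 : 0 < lam := by linarith
  set f : ℕ → A → ℝ := fun n a => (((wordMap H)^[n] [a]).length : ℝ) / (lam ^ n * v a) with hfdef
  set p : ℕ → A → A → ℝ := fun m a b =>
    (((wordMap H)^[m] [a]).count b : ℝ) * v b / (lam ^ m * v a) with hpdef
  have hden : ∀ n a, 0 < lam ^ n * v a := fun n a => mul_pos (pow_pos hl0 n) (hv a)
  obtain ⟨x, hx⟩ := Finite.exists_min v
  have hS : 0 < ∑ a, v a := Finset.sum_pos (fun a _ => hv a) Finset.univ_nonempty
  obtain ⟨c, K, ρ, hc, hK, hρ0, hρ1, hb⟩ := stoch_conv f p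
    (fun m a b => div_nonneg (mul_nonneg (Nat.cast_nonneg _) (hv b).le) (hden m a).le)
    (by
      intro m a
      simp only [hpdef]
      rw [← Finset.sum_div, ← wt_count, wt_iter H v lam h, wt_single, div_self (hden m a).ne'])
    (by
      intro n m a
      simp only [hfdef, hpdef]
      rw [Function.iterate_add_apply, length_iter, wt_count, Finset.sum_div]
      refine Finset.sum_congr rfl fun b _ => ?_
      have h1 := (pow_pos hl0 n).ne'
      have h2 := (pow_pos hl0 m).ne'
      have h3 := (hv a).ne'
      have h4 := (hv b).ne'
      rw [pow_add]
      field_simp)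
    k hk (v x / (lam ^ k * ∑ a, v a)) (div_pos (hv x) (mul_pos (pow_pos hl0 k) hS))
    (by
      intro a b
      simp only [hpdef]
      have h1 : (1 : ℝ) ≤ (((wordMap H)^[k] [a]).count b : ℝ) := by
        exact_mod_cast List.count_pos_iff.mpr (hkp a b)
      have h2 := Finset.single_le_sum (f := v) (fun b _ => (hv b).le) (Finset.mem_univ a)
      apply div_le_div₀ (mul_nonneg (Nat.cast_nonneg _) (hv b).le) _ (hden k a)
        (mul_le_mul_of_nonneg_left h2 (pow_pos hl0 k).le)
      nlinarith [hx b, hv b])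
    (by
      intro a
      simp only [hfdef]
      exact div_pos (by simp) (hden 0 a))
  refine ⟨c, K, lam * ρ, hc, hK, mul_pos hl0 hρ0, by nlinarith, ?_⟩
  intro n w
  have hletter : ∀ a, |(((wordMap H)^[n] [a]).length : ℝ) - c * v a * lam ^ n|
      ≤ K * v a * (lam * ρ) ^ n := by
    intro a
    have h1 := hb n a
    have h2 : (((wordMap H)^[n] [a]).length : ℝ) - c * v a * lam ^ n
        = (f n a - c) * (lam ^ n * v a) := by
      simp only [hfdef]
      rw [sub_mul, div_mul_cancel₀ _ (hden n a).ne']; ring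
    rw [h2, abs_mul, abs_of_pos (hden n a)]
    calc |f n a - c| * (lam ^ n * v a) ≤ K * ρ ^ n * (lam ^ n * v a) :=
          mul_le_mul_of_nonneg_right h1 (hden n a).le
      _ = _ := by rw [mul_pow]; ring
  rw [length_iter]
  induction w with
  | nil => simp [wt]
  | cons a w ih =>
    simp only [wt_cons]
    calc _ = |((((wordMap H)^[n] [a]).length : ℝ) - c * v a * lam ^ n) +
          (wt (fun b => (((wordMap H)^[n] [b]).length : ℝ)) w - c * wt v w * lam ^ n)| := by
            congr 1; ring
      _ ≤ _ := abs_add_le _ _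
      _ ≤ K * v a * (lam * ρ) ^ n + K * wt v w * (lam * ρ) ^ n := add_le_add (hletter a) ih
      _ = _ := by ring

end BispecialPerron

/-- The lengths of bispecial words are of the form `c·λⁿ + O(θⁿ)`
with `c` in a finite set of positive reals and `0 < θ < λ`, where `λ` is the
Perron–Frobenius eigenvalue of the incidence matrix. -/
theorem bispecial_length_asymptotics
    {A : Type*} [Fintype A] [DecidableEq A] [TopologicalSpace A] [DiscreteTopology A]
    (H : A → List A) (hne : ∀ a, H a ≠ [])
    (hprim : PrimitiveSubst H) (haper : AperiodicSubst H)
    (hmarked : MarkedSubst H hne)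
    (u : ℕ → A) (hu : IsFixedPointSubst H u)
    (lam : ℝ) (hlam : IsPerronValue H lam) :
    ∃ θ : ℝ, 0 < θ ∧ θ < lam ∧
      ∃ C : Finset ℝ, (∀ c ∈ C, 0 < c) ∧
        ∃ M : ℝ, 0 < M ∧
          ∀ w : List A, w ∈ Lang u → Bispecial u w →
            ∃ c ∈ C, ∃ n : ℕ, |(w.length : ℝ) - c * lam ^ n| ≤ M * θ ^ n := by
  obtain ⟨v, hv, hev⟩ := hlam
  have hnp : ¬ PeriodicSeq u := haper u hu
  have : Nonempty A := ⟨u 0⟩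
  have : Nontrivial A := by
    by_contra hcon
    rw [not_nontrivial_iff_subsingleton] at hcon
    exact hnp ⟨1, one_pos, fun n => Subsingleton.elim _ _⟩
  have hl1 := lam_gt_one H hne hprim v hv lam hev
  have hl0 : 0 < lam := by linarith
  have hS : 0 < ∑ a, v a := Finset.sum_pos (fun a _ => hv a) Finset.univ_nonempty
  have hgrow : ∀ n, ∃ m, n ≤ ((wordMap H)^[m] [u 0]).length := by
    intro n
    obtain ⟨m, hm⟩ := pow_unbounded_of_one_lt ((n : ℝ) * (∑ a, v a) / v (u 0)) hl1
    refine ⟨m, ?_⟩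
    rw [div_lt_iff₀ (hv _)] at hm
    have h1 := wt_iter H v lam hev m [u 0]
    have h2 := wt_le_length v hv ((wordMap H)^[m] [u 0])
    rw [h1, wt_single] at h2
    have h3 := lt_of_mul_lt_mul_right (hm.trans_le h2) hS.le
    exact_mod_cast h3.le
  have hrec := unif_rec H hne hprim u hu hgrow
  obtain ⟨N, hN⟩ := bispecial_desub H hne u hu hmarked hrec hnp
  obtain ⟨c, K, θ, hc, hK, hθ0, hθ1, hasym⟩ := perron_asymp H hne hprim v hv lam hev hl1
  obtain ⟨x, hx⟩ := Finite.exists_min v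
  -- reduction to short words
  have hred : ∀ T : ℕ, ∀ w, Bispecial u w → wt v w < lam ^ T * v x →
      ∃ (n : ℕ) (z : List A), z.length < N + 1 ∧ w = (wordMap H)^[n] z := by
    intro T
    induction T with
    | zero =>
      intro w _ hwt
      refine ⟨0, w, ?_, rfl⟩
      cases w with
      | nil => simp
      | cons a w =>
        rw [wt_cons] at hwt
        have := wt_nonneg v hv w
        have := hx a
        simp only [pow_zero, one_mul] at hwt
        linarith
    | succ T ih =>
      intro w hw hwt
      by_cases hlen : w.length < N + 1
      · exact ⟨0, w, hlen, rfl⟩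
      · obtain ⟨z, hz, rfl⟩ := hN w hw (by omega)
        rw [wt_wordMap H v lam hev, pow_succ] at hwt
        have h1 : wt v z < lam ^ T * v x := by
          refine lt_of_mul_lt_mul_left (a := lam) ?_ hl0.le
          linarith
        obtain ⟨n, y, hy, rfl⟩ := ih z hz h1
        exact ⟨n + 1, y, hy, by rw [Function.iterate_succ_apply']⟩
  have hfin : {z : List A | z.length < N + 1}.Finite := List.finite_length_lt A (N + 1)
  refine ⟨θ, hθ0, hθ1, insert 1 ((hfin.toFinset.filter (fun z => z ≠ [])).image
    (fun z => c * wt v z)), ?_, K * ((N + 1 : ℕ) * ∑ a, v a) + 1, ?_, ?_⟩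
  · intro d hd
    rw [Finset.mem_insert] at hd
    rcases hd with rfl | hd
    · exact one_pos
    · obtain ⟨z, hz, rfl⟩ := Finset.mem_image.mp hd
      have hz2 := (Finset.mem_filter.mp hz).2
      refine mul_pos hc ?_
      cases z with
      | nil => exact absurd rfl hz2
      | cons a z =>
        rw [wt_cons]
        linarith [hv a, wt_nonneg v hv z]
  · have : 0 ≤ K * ((N + 1 : ℕ) * ∑ a, v a) := mul_nonneg hK (mul_nonneg (Nat.cast_nonneg _) hS.le)
    linarith
  · intro w _ hw
    have hM : 0 ≤ K * ((N + 1 : ℕ) * ∑ a, v a) :=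
      mul_nonneg hK (mul_nonneg (Nat.cast_nonneg _) hS.le)
    obtain ⟨T, hT⟩ := pow_unbounded_of_one_lt (wt v w / v x) hl1
    rw [div_lt_iff₀ (hv x)] at hT
    obtain ⟨n, z, hz, rfl⟩ := hred T w hw hT
    by_cases hz0 : z = []
    · refine ⟨1, Finset.mem_insert_self _ _, 0, ?_⟩
      have : (wordMap H)^[n] z = [] := by
        rw [hz0, ← wordMap_iter]; simp [wordMap]
      rw [this]
      simp only [List.length_nil, Nat.cast_zero, pow_zero, mul_one, zero_sub, abs_neg, abs_one]
      linarith
    · refine ⟨c * wt v z, Finset.mem_insert_of_mem (Finset.mem_image.mpr ⟨z,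
        Finset.mem_filter.mpr ⟨hfin.mem_toFinset.mpr hz, hz0⟩, rfl⟩), n, ?_⟩
      refine (hasym n z).trans (mul_le_mul_of_nonneg_right ?_ (pow_pos hθ0 n).le)
      have h1 := wt_le_length v hv z
      have h2 : (z.length : ℝ) * ∑ a, v a ≤ (N + 1 : ℕ) * ∑ a, v a :=
        mul_le_mul_of_nonneg_right (by exact_mod_cast hz.le) hS.le
      have h3 := mul_le_mul_of_nonneg_left (h1.trans h2) hK
      linarith
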